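/- Let A be a real n×m matrix with columns a₁, …, a_m ∈ ℝⁿ, and let λ₁ ≥ λ₂ ≥ … ≥ λ_n ≥ 0 denote the eigenvalues of A Aᵀ listed with multiplicity in decreasing order. Suppose S₁, …, S_k ∈ ℝⁿ form an orthonormal family with A Aᵀ S_i = λ_i S_i for i = 1, …, k. Then Σ_{j=1}^{m} ‖ a_j − Σ_{i=1}^{k} ⟨S_i, a_j⟩ S_i ‖² = Σ_{i=k+1}^{n} λ_i. -/

import Mathlib

open Matrix
open scoped RealInnerProductSpace

/-!
By Pythagoras the error of projecting the snapshots `a j` onto the span of the orthonormal `S i`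
is the total energy `∑ j, ‖a j‖ ^ 2` minus the captured energies `∑ j, ‖⟪S i, a j⟫‖ ^ 2`. The
captured energy of `S i` is the quadratic form of the correlation operator
`v ↦ ∑ j, ⟪a j, v⟫ • a j` at `S i`, hence its eigenvalue there, while the total energy is the trace
of that operator, hence the sum of all its eigenvalues.
-/

section Projection

open scoped InnerProductSpace

variable {𝕜 E ι κ : Type*} [RCLike 𝕜] [SeminormedAddCommGroup E] [InnerProductSpace 𝕜 E]
  [Fintype ι] [Fintype κ]

theorem norm_sub_sum_inner_smul_sq {S : ι → E} (hS : Orthonormal 𝕜 S) (x : E) :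
    ‖x - ∑ i, ⟪S i, x⟫_𝕜 • S i‖ ^ 2 = ‖x‖ ^ 2 - ∑ i, ‖⟪S i, x⟫_𝕜‖ ^ 2 := by
  set p := ∑ i, ⟪S i, x⟫_𝕜 • S i with hp
  have inner_left : ⟪p, x⟫_𝕜 = ((∑ i, ‖⟪S i, x⟫_𝕜‖ ^ 2 : ℝ) : 𝕜) := by
    simp only [hp, sum_inner, inner_smul_left, RCLike.conj_mul, map_sum, map_pow]
  have inner_self : ⟪p, p⟫_𝕜 = ((∑ i, ‖⟪S i, x⟫_𝕜‖ ^ 2 : ℝ) : 𝕜) := by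
    simp only [hp, hS.inner_sum, RCLike.conj_mul, map_sum, map_pow]
  rw [norm_sub_sq (𝕜 := 𝕜), ← inner_re_symm, inner_left, ← inner_self_eq_norm_sq (𝕜 := 𝕜) p,
    inner_self, RCLike.ofReal_re]
  ring

theorem sum_norm_inner_sq_of_sum_inner_smul_eq {a : κ → E} {v : E} {μ : ℝ}
    (hv : ∑ j, ⟪a j, v⟫_𝕜 • a j = (μ : 𝕜) • v) :
    ∑ j, ‖⟪v, a j⟫_𝕜‖ ^ 2 = μ * ‖v‖ ^ 2 := by
  have quadratic_form : ⟪v, ∑ j, ⟪a j, v⟫_𝕜 • a j⟫_𝕜 = ((∑ j, ‖⟪v, a j⟫_𝕜‖ ^ 2 : ℝ) : 𝕜) := by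
    simp only [inner_sum, inner_smul_right, ← inner_conj_symm (a _) v, RCLike.conj_mul, map_sum,
      map_pow]
  rw [hv, inner_smul_right, inner_self_eq_norm_sq_to_K] at quadratic_form
  exact_mod_cast quadratic_form.symm

theorem sum_norm_sub_sum_inner_smul_sq {a : κ → E} {S : ι → E} (hS : Orthonormal 𝕜 S) {μ : ι → ℝ}
    (hμ : ∀ i, ∑ j, ⟪a j, S i⟫_𝕜 • a j = (μ i : 𝕜) • S i) :
    ∑ j, ‖a j - ∑ i, ⟪S i, a j⟫_𝕜 • S i‖ ^ 2 = ∑ j, ‖a j‖ ^ 2 - ∑ i, μ i := by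
  have captured_energy (i : ι) : ∑ j, ‖⟪S i, a j⟫_𝕜‖ ^ 2 = μ i := by
    rw [sum_norm_inner_sq_of_sum_inner_smul_eq (hμ i), hS.norm_eq_one, one_pow, mul_one]
  simp only [norm_sub_sum_inner_smul_sq hS, Finset.sum_sub_distrib]
  rw [Finset.sum_comm]
  simp only [captured_energy]

end Projection

section Columns

open scoped InnerProductSpace

variable {𝕜 ι κ ν τ : Type*} [RCLike 𝕜] [Fintype ι] [Fintype κ] {A : Matrix ι κ 𝕜}
  {a : κ → EuclideanSpace 𝕜 ι}

theorem trace_mul_conjTranspose_eq_sum_norm_sq_col (ha : ∀ j i, a j i = A i j) :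
    (A * Aᴴ).trace = ((∑ j, ‖a j‖ ^ 2 : ℝ) : 𝕜) := by
  simp only [Matrix.trace, diag_apply, mul_apply, conjTranspose_apply, RCLike.star_def,
    RCLike.mul_conj, EuclideanSpace.norm_sq_eq, ha, map_sum, map_pow]
  exact Finset.sum_comm

theorem sum_inner_smul_col_eq_toLp_mulVec (ha : ∀ j i, a j i = A i j)
    (v : EuclideanSpace 𝕜 ι) :
    ∑ j, ⟪a j, v⟫_𝕜 • a j = WithLp.toLp 2 ((A * Aᴴ) *ᵥ v) := by
  have inner_col (j : κ) : ⟪a j, v⟫_𝕜 = (Aᴴ *ᵥ v) j := by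
    simp [PiLp.inner_apply, mulVec, dotProduct, ha, mul_comm]
  ext i
  rw [← mulVec_mulVec, mulVec_eq_sum]
  simp [inner_col, ha]

variable [DecidableEq ι] [Fintype ν] [DecidableEq ν] [Fintype τ]

theorem sum_norm_sq_col_eq_sum_eigenvalues (ha : ∀ j i, a j i = A i j) :
    ∑ j, ‖a j‖ ^ 2 = ∑ i, (isHermitian_mul_conjTranspose_self A).eigenvalues i := by
  have trace_eq := (isHermitian_mul_conjTranspose_self A).trace_eq_sum_eigenvalues
  rw [trace_mul_conjTranspose_eq_sum_norm_sq_col ha] at trace_eq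
  exact_mod_cast trace_eq

theorem pod_projection_error_of_top_eigenvectors_general (ha : ∀ j i, a j i = A i j)
    {lam : ν → ℝ} (σ : ν ≃ ι)
    (hlam : ∀ i, lam i = (isHermitian_mul_conjTranspose_self A).eigenvalues (σ i))
    (e : τ ↪ ν) {S : τ → EuclideanSpace 𝕜 ι} (hS : Orthonormal 𝕜 S)
    (heig : ∀ i, (A * Aᴴ) *ᵥ S i = lam (e i) • S i) :
    ∑ j, ‖a j - ∑ i, ⟪S i, a j⟫_𝕜 • S i‖ ^ 2 = ∑ i ∈ (Finset.univ.map e)ᶜ, lam i := by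
  have hcorr (i : τ) : ∑ j, ⟪a j, S i⟫_𝕜 • a j = (lam (e i) : 𝕜) • S i := by
    rw [sum_inner_smul_col_eq_toLp_mulVec ha, heig, WithLp.toLp_smul, WithLp.toLp_ofLp,
      RCLike.real_smul_eq_coe_smul (K := 𝕜)]
  have total_energy : ∑ j, ‖a j‖ ^ 2 = ∑ i, lam i := by
    rw [sum_norm_sq_col_eq_sum_eigenvalues ha, ← σ.sum_comp]
    simp only [hlam]
  rw [sum_norm_sub_sum_inner_smul_sq hS hcorr, total_energy, sub_eq_iff_eq_add',
    ← Finset.sum_map Finset.univ e lam, Finset.sum_add_sum_compl]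

end Columns

theorem compl_map_castLEEmb_univ {k n : ℕ} (hk : k ≤ n) :
    (Finset.univ.map (Fin.castLEEmb hk))ᶜ = Finset.univ.filter (fun i : Fin n => k ≤ (i : ℕ)) := by
  ext i
  simp [Fin.exists_iff, Fin.ext_iff]

/-- POD achievability: if `S₁, …, S_k` are orthonormal eigenvectors of `A Aᵀ`
for the `k` largest eigenvalues, the snapshot projection error equals the
tail sum `Σ_{i>k} λ_i` of the decreasingly ordered eigenvalues of `A Aᵀ`. -/
theorem pod_projection_error_of_top_eigenvectors
    (n m : ℕ) (A : Matrix (Fin n) (Fin m) ℝ)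
    (hA : (A * Aᵀ).IsHermitian)
    (lam : Fin n → ℝ)
    (hdec : Antitone lam)
    (hnonneg : ∀ i, 0 ≤ lam i)
    (hperm : ∃ σ : Equiv.Perm (Fin n), ∀ i, lam i = hA.eigenvalues (σ i))
    (k : ℕ) (hk : k ≤ n)
    (S : Fin k → EuclideanSpace ℝ (Fin n))
    (hS : Orthonormal ℝ S)
    (heig : ∀ i : Fin k, (A * Aᵀ) *ᵥ (S i) = lam (Fin.castLE hk i) • (S i))
    (a : Fin m → EuclideanSpace ℝ (Fin n))
    (ha : ∀ j i, a j i = A i j) :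
    ∑ j : Fin m, ‖a j - ∑ i : Fin k, ⟪S i, a j⟫ • S i‖ ^ 2
      = ∑ i ∈ Finset.univ.filter (fun i : Fin n => k ≤ (i : ℕ)), lam i := by
  obtain ⟨σ, hσ⟩ := hperm
  rw [← compl_map_castLEEmb_univ hk]
  exact pod_projection_error_of_top_eigenvectors_general ha σ hσ (Fin.castLEEmb hk) hS heig
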